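/- arXiv:2603.07617 — 2 statements merged into one kernel-verified Lean document; each statement's English description precedes it below -/
import Mathlib

section
/- Let N ≥ 1, let Ω ⊂ ℝ^N be open, δ₀ > 0, and let v : Ω → ℝ be positive and twice continuously differentiable on S = {x ∈ Ω : 0 < v(x) < δ₀}, with |∇v(x)| = 1 and |Δv(x)| ≤ M on S for some M ≥ 0. Let q > 1 and β ≥ 0 with q > β + 2 (the high-order gradient regime). Assume h : [0,∞) → [0,∞) satisfies h(s) ≥ l₁·s^q for all s ≥ 0 with l₁ > 0; that b(x) ≥ b₁·v(x)^β on S with b₁ > 0; that a(x) ≥ 0 on S; and that f(x) ≤ F₀ on S for some constant F₀. Then for every γ > 0 and every C > 0 there exists δ ∈ (0, δ₀] such that W(x) = C·v(x)^{−γ} satisfies −ΔW(x) + b(x)·h(|∇W(x)|) + a(x)·W(x) − f(x) ≥ 0 for every x ∈ Ω with 0 < v(x) < δ. -/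
open Set

/-- The Laplacian of `f : ℝ^N → ℝ`, as the sum of the pure second derivatives in the
coordinate directions. -/
noncomputable def laplacian {N : ℕ} (f : EuclideanSpace ℝ (Fin N) → ℝ)
    (x : EuclideanSpace ℝ (Fin N)) : ℝ :=
  ∑ i : Fin N, fderiv ℝ (fun y => fderiv ℝ f y (EuclideanSpace.single i 1)) x
    (EuclideanSpace.single i 1)

/-!
Where `|∇v| = 1` the chain rule gives `|∇W| = Cγ v^{-γ-1}` and
`ΔW = Cγ(γ+1) v^{-γ-2} - Cγ v^{-γ-1} Δv`, while `b h(|∇W|)` is at least a positive multiple of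
`v^{β-(γ+1)q}`. As `v → 0⁺` the latter absorbs `ΔW` and the bounded `f` as soon as its exponent is
the most negative one, i.e. `γ + 2 < (γ + 1) q - β`. If `q > 1` this says
`γ > (β + 2 - q) / (q - 1)`, which holds for every `γ > 0` when `q > β + 2`.
-/

open Asymptotics Filter Topology

section ChainRule

variable {E : Type*} [NormedAddCommGroup E] [NormedSpace ℝ E] {g : ℝ → ℝ} {v : E → ℝ} {x : E}

lemma fderiv_real_comp (hg : DifferentiableAt ℝ g (v x)) (hv : DifferentiableAt ℝ v x) :
    fderiv ℝ (fun y => g (v y)) x = deriv g (v x) • fderiv ℝ v x :=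
  (hg.hasDerivAt.comp_hasFDerivAt x hv.hasFDerivAt).fderiv

lemma fderiv_fderiv_real_comp_apply (hg : ContDiffAt ℝ 2 g (v x)) (hv : ContDiffAt ℝ 2 v x)
    (e e' : E) :
    fderiv ℝ (fun y => fderiv ℝ (fun z => g (v z)) y e) x e' =
      deriv (deriv g) (v x) * (fderiv ℝ v x e * fderiv ℝ v x e') +
        deriv g (v x) * fderiv ℝ (fun y => fderiv ℝ v y e) x e' := by
  have hv_diff : ∀ᶠ y in 𝓝 x, DifferentiableAt ℝ v y :=
    (hv.eventually (by simp)).mono fun y hy => hy.differentiableAt two_ne_zero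
  have hg_diff : ∀ᶠ y in 𝓝 x, DifferentiableAt ℝ g (v y) :=
    hv.continuousAt.eventually <|
      (hg.eventually (by simp)).mono fun t ht => ht.differentiableAt two_ne_zero
  have hfst : (fun y => fderiv ℝ (fun z => g (v z)) y e) =ᶠ[𝓝 x]
      fun y => deriv g (v y) * fderiv ℝ v y e := by
    filter_upwards [hv_diff, hg_diff] with y hvy hgy
    rw [fderiv_real_comp hgy hvy, smul_apply, smul_eq_mul]
  have hdg : DifferentiableAt ℝ (deriv g) (v x) :=
    (hg.derivWithin (m := 1) (by norm_num)).differentiableAt one_ne_zero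
  have hdgv : DifferentiableAt ℝ (fun y => deriv g (v y)) x := hdg.comp x hv_diff.self_of_nhds
  have hdv : DifferentiableAt ℝ (fun y => fderiv ℝ v y e) x :=
    ((hv.fderiv_right (m := 1) (by norm_num)).differentiableAt one_ne_zero).clm_apply
      (differentiableAt_const e)
  rw [hfst.fderiv_eq, fderiv_fun_mul hdgv hdv, fderiv_real_comp hdg hv_diff.self_of_nhds]
  simp only [add_apply, smul_apply, smul_eq_mul]
  ring

end ChainRule

lemma gradient_real_comp {E : Type*} [NormedAddCommGroup E] [InnerProductSpace ℝ E]
    [CompleteSpace E] {g : ℝ → ℝ} {v : E → ℝ} {x : E}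
    (hg : DifferentiableAt ℝ g (v x)) (hv : DifferentiableAt ℝ v x) :
    gradient (fun y => g (v y)) x = deriv g (v x) • gradient v x := by
  simp only [gradient, fderiv_real_comp hg hv, map_smul]

lemma norm_gradient_sq_eq_sum {N : ℕ} (v : EuclideanSpace ℝ (Fin N) → ℝ)
    (x : EuclideanSpace ℝ (Fin N)) :
    ‖gradient v x‖ ^ 2 = ∑ i : Fin N, fderiv ℝ v x (EuclideanSpace.single i 1) ^ 2 := by
  simp [gradient, (EuclideanSpace.basisFun (Fin N) ℝ).norm_dual]

lemma laplacian_real_comp {N : ℕ} {g : ℝ → ℝ} {v : EuclideanSpace ℝ (Fin N) → ℝ}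
    {x : EuclideanSpace ℝ (Fin N)} (hg : ContDiffAt ℝ 2 g (v x))
    (hv : ContDiffAt ℝ 2 v x) :
    laplacian (fun y => g (v y)) x =
      deriv (deriv g) (v x) * ‖gradient v x‖ ^ 2 + deriv g (v x) * laplacian v x := by
  simp only [laplacian, fderiv_fderiv_real_comp_apply hg hv, norm_gradient_sq_eq_sum, ← sq,
    Finset.sum_add_distrib, Finset.mul_sum]

lemma deriv_const_mul_rpow (C r : ℝ) :
    deriv (fun t : ℝ => C * t ^ r) = fun t => C * r * t ^ (r - 1) := by
  ext t
  rw [deriv_const_mul_field, Real.deriv_rpow_const, mul_assoc]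

lemma contDiffAt_const_mul_rpow {n : WithTop ℕ∞} {t : ℝ} (ht : t ≠ 0) (C r : ℝ) :
    ContDiffAt ℝ n (fun s : ℝ => C * s ^ r) t :=
  contDiffAt_const.mul (Real.contDiffAt_rpow_const_of_ne ht)

lemma gradient_const_mul_rpow {E : Type*} [NormedAddCommGroup E] [InnerProductSpace ℝ E]
    [CompleteSpace E] {v : E → ℝ} {x : E} (hv : DifferentiableAt ℝ v x) (hx : v x ≠ 0) (C r : ℝ) :
    gradient (fun y => C * v y ^ r) x = (C * r * v x ^ (r - 1)) • gradient v x := by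
  rw [gradient_real_comp ((contDiffAt_const_mul_rpow hx C r).differentiableAt one_ne_zero) hv,
    deriv_const_mul_rpow]

lemma laplacian_const_mul_rpow {N : ℕ} {v : EuclideanSpace ℝ (Fin N) → ℝ}
    {x : EuclideanSpace ℝ (Fin N)} (hv : ContDiffAt ℝ 2 v x) (hx : v x ≠ 0) (C r : ℝ) :
    laplacian (fun y => C * v y ^ r) x =
      C * r * (r - 1) * v x ^ (r - 2) * ‖gradient v x‖ ^ 2 +
        C * r * v x ^ (r - 1) * laplacian v x := by
  rw [laplacian_real_comp (contDiffAt_const_mul_rpow hx C r) hv, deriv_const_mul_rpow,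
    deriv_const_mul_rpow, sub_sub, one_add_one_eq_two]

lemma norm_gradient_const_mul_rpow_neg {E : Type*} [NormedAddCommGroup E] [InnerProductSpace ℝ E]
    [CompleteSpace E] {v : E → ℝ} {x : E} {γ C : ℝ} (hv : DifferentiableAt ℝ v x) (hx : 0 < v x)
    (hgrad : ‖gradient v x‖ = 1) (hγ : 0 ≤ γ) (hC : 0 ≤ C) :
    ‖gradient (fun y => C * v y ^ (-γ)) x‖ = C * γ * v x ^ (-γ - 1) := by
  rw [gradient_const_mul_rpow hv hx.ne', norm_smul, hgrad, mul_one, mul_neg, neg_mul, norm_neg,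
    Real.norm_of_nonneg (by positivity)]

lemma laplacian_const_mul_rpow_neg_le {N : ℕ} {v : EuclideanSpace ℝ (Fin N) → ℝ}
    {x : EuclideanSpace ℝ (Fin N)} {γ C M : ℝ} (hv : ContDiffAt ℝ 2 v x) (hx : 0 < v x)
    (hgrad : ‖gradient v x‖ = 1) (hlap : -M ≤ laplacian v x) (hγ : 0 ≤ γ) (hC : 0 ≤ C) :
    laplacian (fun y => C * v y ^ (-γ)) x ≤
      C * γ * (γ + 1) * v x ^ (-γ - 2) + C * γ * M * v x ^ (-γ - 1) :=
  calc laplacian (fun y => C * v y ^ (-γ)) x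
    _ = C * γ * (γ + 1) * v x ^ (-γ - 2) + C * γ * v x ^ (-γ - 1) * -laplacian v x := by
        rw [laplacian_const_mul_rpow hv hx.ne', hgrad]
        ring
    _ ≤ C * γ * (γ + 1) * v x ^ (-γ - 2) + C * γ * v x ^ (-γ - 1) * M := by
        gcongr
        exact neg_le.mp hlap
    _ = C * γ * (γ + 1) * v x ^ (-γ - 2) + C * γ * M * v x ^ (-γ - 1) := by ring

lemma mul_rpow_le_mul_comp_mul_rpow {h : ℝ → ℝ} {q l b b₁ β t : ℝ}
    (hh : ∀ s : ℝ, 0 ≤ s → l * s ^ q ≤ h s) (hl : 0 ≤ l) (hb₁ : 0 ≤ b₁) (hb : b₁ * t ^ β ≤ b)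
    (ht : 0 < t) {K : ℝ} (hK : 0 ≤ K) (r : ℝ) :
    b₁ * l * K ^ q * t ^ (β + r * q) ≤ b * h (K * t ^ r) :=
  calc b₁ * l * K ^ q * t ^ (β + r * q)
    _ = b₁ * t ^ β * (l * (K * t ^ r) ^ q) := by
        rw [Real.mul_rpow hK (by positivity), ← Real.rpow_mul ht.le, Real.rpow_add ht]
        ring
    _ ≤ b * h (K * t ^ r) :=
        mul_le_mul hb (hh _ (by positivity)) (by positivity) (le_trans (by positivity) hb)

lemma isLittleO_rpow_rpow_nhdsGT_zero {p r : ℝ} (hpr : p < r) :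
    (fun t : ℝ => t ^ r) =o[𝓝[>] 0] fun t => t ^ p := by
  have hlim : Tendsto (fun t : ℝ => t ^ (r - p)) (𝓝[>] 0) (𝓝 0) := by
    have hcont := (Real.continuousAt_rpow_const 0 (r - p) (.inr (sub_pos.2 hpr).le)).tendsto
    rw [Real.zero_rpow (sub_pos.2 hpr).ne'] at hcont
    exact hcont.mono_left nhdsWithin_le_nhds
  refine (isLittleO_iff_tendsto' ?_).2 (hlim.congr' ?_)
  · filter_upwards [self_mem_nhdsWithin] with t ht hzero
    exact absurd hzero (Real.rpow_pos_of_pos ht p).ne'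
  · filter_upwards [self_mem_nhdsWithin] with t ht using Real.rpow_sub ht r p

lemma eventually_add_le_mul_rpow_nhdsGT_zero {p r s K : ℝ} (hp : p < 0) (hpr : p < r)
    (hps : p < s) (hK : 0 < K) (A B F : ℝ) :
    ∀ᶠ t in 𝓝[>] (0 : ℝ), A * t ^ r + B * t ^ s + F ≤ K * t ^ p := by
  have hconst : (fun _ : ℝ => F) =o[𝓝[>] 0] fun t => t ^ p := by
    simpa using (isLittleO_rpow_rpow_nhdsGT_zero hp).const_mul_left F
  have hsum := (((isLittleO_rpow_rpow_nhdsGT_zero hpr).const_mul_left A).add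
    ((isLittleO_rpow_rpow_nhdsGT_zero hps).const_mul_left B)).add hconst
  filter_upwards [hsum.def hK, self_mem_nhdsWithin] with t hle ht
  rw [Real.norm_of_nonneg (Real.rpow_nonneg (le_of_lt ht) p)] at hle
  exact (Real.le_norm_self _).trans hle

/-- The part of `Ω` on which `v` is positive and less than `δ`. When `v` is a distance to the
boundary of `Ω`, this is the one-sided boundary strip of width `δ`. -/
def collar {α : Type*} (Ω : Set α) (v : α → ℝ) (δ : ℝ) : Set α :=
  {x ∈ Ω | 0 < v x ∧ v x < δ}

lemma collar_mem_nhds {α : Type*} [TopologicalSpace α] {Ω : Set α} {v : α → ℝ} {δ : ℝ} {x : α}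
    (hΩ : IsOpen Ω) (hv : ContinuousAt v x) (hx : x ∈ collar Ω v δ) : collar Ω v δ ∈ 𝓝 x :=
  inter_mem (hΩ.mem_nhds hx.1) (hv (Ioo_mem_nhds hx.2.1 hx.2.2))

lemma exists_forall_mem_collar {P : ℝ → Prop} (hP : ∀ᶠ t in 𝓝[>] (0 : ℝ), P t) {δ₀ : ℝ}
    (hδ₀ : 0 < δ₀) {α : Type*} (Ω : Set α) (v : α → ℝ) :
    ∃ δ : ℝ, 0 < δ ∧ δ ≤ δ₀ ∧ ∀ x ∈ collar Ω v δ, x ∈ collar Ω v δ₀ ∧ P (v x) := by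
  obtain ⟨δ, ⟨hδ, hδδ₀⟩, hPδ⟩ := (mem_nhdsGT_iff_exists_mem_Ioc_Ioo_subset hδ₀).1 hP
  exact ⟨δ, hδ, hδδ₀, fun x ⟨hxΩ, hx, hxδ⟩ =>
    ⟨⟨hxΩ, hx, hxδ.trans_le hδδ₀⟩, hPδ ⟨hx, hxδ⟩⟩⟩

theorem supersolution_barrier_high_order_general {N : ℕ}
    {Ω : Set (EuclideanSpace ℝ (Fin N))} (hΩ : IsOpen Ω) {δ₀ : ℝ} (hδ₀ : 0 < δ₀)
    {v : EuclideanSpace ℝ (Fin N) → ℝ} {M : ℝ}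
    (hv : ContDiffOn ℝ 2 v (collar Ω v δ₀))
    (hgrad : ∀ x ∈ collar Ω v δ₀, ‖gradient v x‖ = 1)
    (hlap : ∀ x ∈ collar Ω v δ₀, -M ≤ laplacian v x)
    {q β γ C : ℝ} (hγ : 0 < γ) (hC : 0 < C) (hqβγ : γ + 2 < (γ + 1) * q - β)
    {h : ℝ → ℝ} {l₁ : ℝ} (hl₁ : 0 < l₁) (hh : ∀ s : ℝ, 0 ≤ s → l₁ * s ^ q ≤ h s)
    {a b f : EuclideanSpace ℝ (Fin N) → ℝ} {b₁ : ℝ} (hb₁ : 0 < b₁)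
    (hbv : ∀ x ∈ collar Ω v δ₀, b₁ * v x ^ β ≤ b x)
    (ha : ∀ x ∈ collar Ω v δ₀, 0 ≤ a x)
    {F₀ : ℝ} (hf : ∀ x ∈ collar Ω v δ₀, f x ≤ F₀) :
    ∃ δ : ℝ, 0 < δ ∧ δ ≤ δ₀ ∧ ∀ x ∈ Ω, 0 < v x → v x < δ →
      0 ≤ -laplacian (fun y => C * v y ^ (-γ)) x
          + b x * h ‖gradient (fun y => C * v y ^ (-γ)) x‖
          + a x * (C * v x ^ (-γ)) - f x := by
  obtain ⟨δ, hδ, hδδ₀, hcollar⟩ := exists_forall_mem_collar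
    (eventually_add_le_mul_rpow_nhdsGT_zero (p := β + (-γ - 1) * q) (r := -γ - 2) (s := -γ - 1)
      (by linarith) (by linarith) (by linarith) (show 0 < b₁ * l₁ * (C * γ) ^ q by positivity)
      (C * γ * (γ + 1)) (C * γ * M) F₀) hδ₀ Ω v
  refine ⟨δ, hδ, hδδ₀, fun x hxΩ hpos hxδ => ?_⟩
  obtain ⟨hx, hdom⟩ := hcollar x ⟨hxΩ, hpos, hxδ⟩
  -- `v` is only assumed smooth within the collar, but the junk gradient `0` is excluded.
  have hdiff : DifferentiableAt ℝ v x := by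
    by_contra hnd
    simpa [gradient_eq_zero_of_not_differentiableAt hnd] using hgrad x hx
  have hΔ := laplacian_const_mul_rpow_neg_le
    (hv.contDiffAt (collar_mem_nhds hΩ hdiff.continuousAt hx)) hpos (hgrad x hx) (hlap x hx)
    hγ.le hC.le
  have hgrad_term := mul_rpow_le_mul_comp_mul_rpow hh hl₁.le hb₁.le (hbv x hx) hpos
    (mul_nonneg hC.le hγ.le) (-γ - 1)
  rw [← norm_gradient_const_mul_rpow_neg hdiff hpos (hgrad x hx) hγ.le hC.le] at hgrad_term
  have hzero_order : 0 ≤ a x * (C * v x ^ (-γ)) := mul_nonneg (ha x hx) (by positivity)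
  linarith [hf x hx]

/-- in the high-order gradient regime `q > β + 2`, for every `γ > 0` and
every `C > 0` the function `W = C·v^{−γ}` satisfies `−ΔW + b·h(|∇W|) + a·W − f ≥ 0`
on `{0 < v < δ}` for some `δ ∈ (0, δ₀]`, under `h(s) ≥ l₁·s^q`, `b ≥ b₁·v^β`, `a ≥ 0`,
`f ≤ F₀` on the collar `S = {x ∈ Ω : 0 < v(x) < δ₀}` where `|∇v| = 1`, `|Δv| ≤ M`. -/
theorem supersolution_barrier_high_order {N : ℕ} (hN : 1 ≤ N)
    (Ω : Set (EuclideanSpace ℝ (Fin N))) (hΩ : IsOpen Ω)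
    (δ₀ : ℝ) (hδ₀ : 0 < δ₀)
    (v : EuclideanSpace ℝ (Fin N) → ℝ) (M : ℝ) (hM : 0 ≤ M)
    (hv : ContDiffOn ℝ 2 v {x ∈ Ω | 0 < v x ∧ v x < δ₀})
    (hgrad : ∀ x ∈ {x ∈ Ω | 0 < v x ∧ v x < δ₀}, ‖gradient v x‖ = 1)
    (hlap : ∀ x ∈ {x ∈ Ω | 0 < v x ∧ v x < δ₀}, |laplacian v x| ≤ M)
    (q β : ℝ) (hq : 1 < q) (hβ : 0 ≤ β) (hqβ : β + 2 < q)
    (h : ℝ → ℝ) (l₁ : ℝ) (hl₁ : 0 < l₁)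
    (hhnn : ∀ s : ℝ, 0 ≤ s → 0 ≤ h s)
    (hh : ∀ s : ℝ, 0 ≤ s → l₁ * s ^ q ≤ h s)
    (a b f : EuclideanSpace ℝ (Fin N) → ℝ) (b₁ : ℝ) (hb₁ : 0 < b₁)
    (hbv : ∀ x ∈ {x ∈ Ω | 0 < v x ∧ v x < δ₀}, b₁ * v x ^ β ≤ b x)
    (ha : ∀ x ∈ {x ∈ Ω | 0 < v x ∧ v x < δ₀}, 0 ≤ a x)
    (F₀ : ℝ) (hf : ∀ x ∈ {x ∈ Ω | 0 < v x ∧ v x < δ₀}, f x ≤ F₀) :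
    ∀ γ : ℝ, 0 < γ → ∀ C : ℝ, 0 < C →
      ∃ δ : ℝ, 0 < δ ∧ δ ≤ δ₀ ∧ ∀ x ∈ Ω, 0 < v x → v x < δ →
        0 ≤ -laplacian (fun y => C * v y ^ (-γ)) x
            + b x * h ‖gradient (fun y => C * v y ^ (-γ)) x‖
            + a x * (C * v x ^ (-γ)) - f x :=
  fun _ hγ _ hC => supersolution_barrier_high_order_general hΩ hδ₀ hv hgrad
    (fun x hx => neg_le_of_abs_le (hlap x hx)) hγ hC
    (by linarith [mul_lt_mul_of_pos_left hq hγ]) hl₁ hh hb₁ hbv ha hf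
end

section
/- Let N ≥ 1, let Ω ⊂ ℝ^N be open, 0 < δ₀ < 1, and let v : Ω → ℝ be positive and twice continuously differentiable on S = {x ∈ Ω : 0 < v(x) < δ₀}, with |∇v(x)| = 1 and |Δv(x)| ≤ M on S for some M ≥ 0. Let q > 1 and set β = q − 2, assuming β ≥ 0 (the critical logarithmic regime q = β + 2). Assume h : [0,∞) → [0,∞) satisfies h(s) ≥ l₁·s^q for all s ≥ 0 with l₁ > 0; that b(x) ≥ b₁·v(x)^β on S with b₁ > 0; that a(x) ≥ 0 on S; and that f(x) ≤ F₀ on S for some constant F₀. Let C > 0 and define W(x) = C·ln(1/v(x)) on S. Then for every ε > 0 there exists δ ∈ (0, δ₀] such that v(x)²·(−ΔW(x) + b(x)·h(|∇W(x)|) + a(x)·W(x) − f(x)) ≥ b₁·l₁·C^q − C − ε for every x ∈ Ω with 0 < v(x) < δ. -/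
open Set

/-!
Since `|∇v| = 1`, the chain rule gives `|∇W| = C / v` and `ΔW = C / v² - C Δv / v`. After
multiplication by `v²`, the second-order term is `-C + C v Δv`, while the absorption term is at
least `v² · b₁ v ^ (q - 2) · l₁ (C / v) ^ q = b₁ l₁ C ^ q`, the powers of `v` cancelling exactly at
the critical exponent. Where `v ≤ 1` the barrier `W` is nonnegative, so the zero-order term only
helps, and the remaining errors are `O(v)`.
-/

open Topology

section ChainRule

section NormedSpace

variable {E : Type*} [NormedAddCommGroup E] [NormedSpace ℝ E]
  {φ φ' : ℝ → ℝ} {φ'' : ℝ} {v : E → ℝ} {x : E}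

theorem fderiv_fderiv_comp_apply (hφ : ∀ᶠ t in 𝓝 (v x), HasDerivAt φ (φ' t) t)
    (hφ' : HasDerivAt φ' φ'' (v x)) (hv : ContDiffAt ℝ 2 v x) (e : E) :
    fderiv ℝ (fun y => fderiv ℝ (fun z => φ (v z)) y e) x e =
      φ'' * fderiv ℝ v x e ^ 2 + φ' (v x) * fderiv ℝ (fun y => fderiv ℝ v y e) x e := by
  have hvx : DifferentiableAt ℝ v x := hv.differentiableAt two_ne_zero
  have hv_near : ∀ᶠ y in 𝓝 x, DifferentiableAt ℝ v y :=
    (hv.eventually (by simp)).mono fun y hy => hy.differentiableAt two_ne_zero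
  have hfirst : (fun y => fderiv ℝ (fun z => φ (v z)) y e) =ᶠ[𝓝 x]
      fun y => φ' (v y) * fderiv ℝ v y e := by
    filter_upwards [hv_near, hvx.continuousAt.eventually hφ] with y hvy hφy
    have hcomp : HasFDerivAt (fun z => φ (v z)) (φ' (v y) • fderiv ℝ v y) y :=
      hφy.comp_hasFDerivAt y hvy.hasFDerivAt
    rw [hcomp.fderiv, smul_apply, smul_eq_mul]
  have hve : DifferentiableAt ℝ (fun y => fderiv ℝ v y e) x :=
    ((hv.fderiv_right (m := 1) (by norm_num)).differentiableAt one_ne_zero).clm_apply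
      (differentiableAt_const e)
  have hφ'v : HasFDerivAt (fun y => φ' (v y)) (φ'' • fderiv ℝ v x) x :=
    hφ'.comp_hasFDerivAt x hvx.hasFDerivAt
  rw [hfirst.fderiv_eq, (hφ'v.fun_mul hve.hasFDerivAt).fderiv]
  simp only [add_apply, smul_apply, smul_eq_mul]
  ring

end NormedSpace

section InnerProductSpace

variable {F : Type*} [NormedAddCommGroup F] [InnerProductSpace ℝ F] [CompleteSpace F]
  {φ : ℝ → ℝ} {φ' : ℝ} {v : F → ℝ} {x : F}

theorem gradient_comp (hφ : HasDerivAt φ φ' (v x)) (hv : DifferentiableAt ℝ v x) :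
    gradient (fun y => φ (v y)) x = φ' • gradient v x := by
  have hcomp : HasFDerivAt (fun y => φ (v y)) (φ' • fderiv ℝ v x) x :=
    hφ.comp_hasFDerivAt x hv.hasFDerivAt
  rw [gradient, hcomp.fderiv, map_smul, gradient]

end InnerProductSpace

theorem sum_sq_fderiv_single {N : ℕ} (v : EuclideanSpace ℝ (Fin N) → ℝ)
    (x : EuclideanSpace ℝ (Fin N)) :
    ∑ i, fderiv ℝ v x (EuclideanSpace.single i 1) ^ 2 = ‖gradient v x‖ ^ 2 := by
  simp only [← (EuclideanSpace.basisFun (Fin N) ℝ).sum_sq_inner_left, inner_gradient_left,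
    EuclideanSpace.basisFun_apply]

theorem laplacian_comp {N : ℕ} {φ φ' : ℝ → ℝ} {φ'' : ℝ} {v : EuclideanSpace ℝ (Fin N) → ℝ}
    {x : EuclideanSpace ℝ (Fin N)} (hφ : ∀ᶠ t in 𝓝 (v x), HasDerivAt φ (φ' t) t)
    (hφ' : HasDerivAt φ' φ'' (v x)) (hv : ContDiffAt ℝ 2 v x) :
    laplacian (fun y => φ (v y)) x = φ'' * ‖gradient v x‖ ^ 2 + φ' (v x) * laplacian v x := by
  simp only [laplacian, fderiv_fderiv_comp_apply hφ hφ' hv, Finset.sum_add_distrib,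
    ← Finset.mul_sum, sum_sq_fderiv_single]

end ChainRule

section LogBarrier

/-- The barrier `W = C ln (1 / v)` built from a defining function `v`; it blows up where
`v` tends to `0`. -/
noncomputable def logBarrier {X : Type*} (C : ℝ) (v : X → ℝ) (x : X) : ℝ :=
  C * Real.log (1 / v x)

theorem logBarrier_nonneg {X : Type*} {C : ℝ} {v : X → ℝ} {x : X} (hC : 0 ≤ C) (hpos : 0 < v x)
    (hle : v x ≤ 1) : 0 ≤ logBarrier C v x :=
  mul_nonneg hC (Real.log_nonneg ((one_le_div hpos).mpr hle))

theorem hasDerivAt_const_mul_log_one_div (C : ℝ) {t : ℝ} (ht : t ≠ 0) :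
    HasDerivAt (fun s => C * Real.log (1 / s)) (-C / t) t := by
  simp only [one_div, Real.log_inv]
  exact ((Real.hasDerivAt_log ht).neg.const_mul C).congr_deriv (by ring)

theorem hasDerivAt_neg_const_div (C : ℝ) {t : ℝ} (ht : t ≠ 0) :
    HasDerivAt (fun s => -C / s) (C / t ^ 2) t := by
  simp only [div_eq_mul_inv]
  exact ((hasDerivAt_inv ht).const_mul (-C)).congr_deriv (by ring)

theorem norm_gradient_logBarrier {F : Type*} [NormedAddCommGroup F] [InnerProductSpace ℝ F]
    [CompleteSpace F] (C : ℝ) {v : F → ℝ} {x : F} (hv : DifferentiableAt ℝ v x) (hx : v x ≠ 0) :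
    ‖gradient (logBarrier C v) x‖ = |C / v x| * ‖gradient v x‖ := by
  have hgrad : gradient (logBarrier C v) x = (-C / v x) • gradient v x :=
    gradient_comp (hasDerivAt_const_mul_log_one_div C hx) hv
  rw [hgrad, norm_smul, neg_div, norm_neg, Real.norm_eq_abs]

theorem laplacian_logBarrier {N : ℕ} (C : ℝ) {v : EuclideanSpace ℝ (Fin N) → ℝ}
    {x : EuclideanSpace ℝ (Fin N)} (hv : ContDiffAt ℝ 2 v x) (hx : v x ≠ 0) :
    laplacian (logBarrier C v) x =
      C / v x ^ 2 * ‖gradient v x‖ ^ 2 + -C / v x * laplacian v x :=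
  laplacian_comp ((eventually_ne_nhds hx).mono fun _ => hasDerivAt_const_mul_log_one_div C)
    (hasDerivAt_neg_const_div C hx) hv

end LogBarrier

section CriticalScaling

variable {t C q : ℝ}

theorem sq_mul_rpow_sub_two_mul_div_rpow (ht : 0 < t) (hC : 0 ≤ C) :
    t ^ 2 * (t ^ (q - 2) * (C / t) ^ q) = C ^ q := by
  have htq : t ^ q ≠ 0 := (Real.rpow_pos_of_pos ht q).ne'
  rw [Real.div_rpow hC ht.le, Real.rpow_sub ht, Real.rpow_two]
  field_simp

theorem mul_mul_rpow_le_sq_mul_absorption {b b₁ l₁ H : ℝ} (ht : 0 < t) (hC : 0 ≤ C)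
    (hb₁ : 0 ≤ b₁) (hl₁ : 0 ≤ l₁) (hb : b₁ * t ^ (q - 2) ≤ b) (hH : l₁ * (C / t) ^ q ≤ H) :
    b₁ * l₁ * C ^ q ≤ t ^ 2 * (b * H) := by
  have hb_nonneg : 0 ≤ b := le_trans (by positivity) hb
  calc b₁ * l₁ * C ^ q = t ^ 2 * ((b₁ * t ^ (q - 2)) * (l₁ * (C / t) ^ q)) := by
        rw [← sq_mul_rpow_sub_two_mul_div_rpow (q := q) ht hC]
        ring
    _ ≤ t ^ 2 * (b * H) := by gcongr

theorem sq_mul_le_mul_abs {f F₀ : ℝ} (ht : 0 ≤ t) (ht1 : t ≤ 1) (hf : f ≤ F₀) :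
    t ^ 2 * f ≤ t * |F₀| :=
  calc t ^ 2 * f ≤ t ^ 2 * |F₀| := by gcongr; exact hf.trans (le_abs_self F₀)
    _ ≤ t * |F₀| := by gcongr; exact pow_le_of_le_one ht ht1 two_ne_zero

end CriticalScaling

theorem le_sq_mul_logBarrier_operator {N : ℕ} {v : EuclideanSpace ℝ (Fin N) → ℝ}
    {x : EuclideanSpace ℝ (Fin N)} (hv : ContDiffAt ℝ 2 v x) (hpos : 0 < v x) (hle : v x ≤ 1)
    (hgrad : ‖gradient v x‖ = 1) {M : ℝ} (hlap : -M ≤ laplacian v x)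
    {C q b₁ l₁ a b f F₀ : ℝ} {h : ℝ → ℝ} (hC : 0 ≤ C) (hb₁ : 0 ≤ b₁) (hl₁ : 0 ≤ l₁)
    (hb : b₁ * v x ^ (q - 2) ≤ b) (hh : l₁ * (C / v x) ^ q ≤ h (C / v x))
    (ha : 0 ≤ a) (hf : f ≤ F₀) :
    b₁ * l₁ * C ^ q - C - v x * (C * M + |F₀|) ≤
      v x ^ 2 * (-laplacian (logBarrier C v) x + b * h ‖gradient (logBarrier C v) x‖
        + a * logBarrier C v x - f) := by
  have hgradW : ‖gradient (logBarrier C v) x‖ = C / v x := by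
    rw [norm_gradient_logBarrier C (hv.differentiableAt two_ne_zero) hpos.ne', hgrad, mul_one,
      abs_of_nonneg (by positivity)]
  have hdiffusion : -C - v x * (C * M) ≤ v x ^ 2 * -laplacian (logBarrier C v) x :=
    calc -C - v x * (C * M) = -C + C * v x * -M := by ring
      _ ≤ -C + C * v x * laplacian v x := by gcongr
      _ = v x ^ 2 * -laplacian (logBarrier C v) x := by
        rw [laplacian_logBarrier C hv hpos.ne', hgrad]
        field_simp
        ring
  have habsorption : b₁ * l₁ * C ^ q ≤ v x ^ 2 * (b * h (C / v x)) :=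
    mul_mul_rpow_le_sq_mul_absorption hpos hC hb₁ hl₁ hb hh
  have hzeroOrder : 0 ≤ v x ^ 2 * (a * logBarrier C v x) := by
    have := logBarrier_nonneg hC hpos hle
    positivity
  have hsource : v x ^ 2 * f ≤ v x * |F₀| := sq_mul_le_mul_abs hpos.le hle hf
  rw [hgradW]
  linarith

theorem differentiableAt_of_gradient_ne_zero {F : Type*} [NormedAddCommGroup F]
    [InnerProductSpace ℝ F] [CompleteSpace F] {v : F → ℝ} {x : F} (hx : gradient v x ≠ 0) :
    DifferentiableAt ℝ v x :=
  not_imp_comm.mp gradient_eq_zero_of_not_differentiableAt hx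

theorem critical_logarithmic_barrier_general {N : ℕ}
    (Ω : Set (EuclideanSpace ℝ (Fin N))) (hΩ : IsOpen Ω) (δ₀ : ℝ) (hδ₀ : 0 < δ₀)
    (v : EuclideanSpace ℝ (Fin N) → ℝ) (M : ℝ)
    (hv : ContDiffOn ℝ 2 v {x ∈ Ω | 0 < v x ∧ v x < δ₀})
    (hgrad : ∀ x ∈ {x ∈ Ω | 0 < v x ∧ v x < δ₀}, ‖gradient v x‖ = 1)
    (hlap : ∀ x ∈ {x ∈ Ω | 0 < v x ∧ v x < δ₀}, -M ≤ laplacian v x)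
    (q : ℝ) (h : ℝ → ℝ) (l₁ : ℝ) (hl₁ : 0 ≤ l₁) (hh : ∀ s : ℝ, 0 < s → l₁ * s ^ q ≤ h s)
    (a b f : EuclideanSpace ℝ (Fin N) → ℝ) (b₁ : ℝ) (hb₁ : 0 ≤ b₁)
    (hbv : ∀ x ∈ {x ∈ Ω | 0 < v x ∧ v x < δ₀}, b₁ * v x ^ (q - 2) ≤ b x)
    (ha : ∀ x ∈ {x ∈ Ω | 0 < v x ∧ v x < δ₀}, 0 ≤ a x)
    (F₀ : ℝ) (hf : ∀ x ∈ {x ∈ Ω | 0 < v x ∧ v x < δ₀}, f x ≤ F₀) (C : ℝ) (hC : 0 < C) :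
    ∀ ε : ℝ, 0 < ε →
      ∃ δ : ℝ, 0 < δ ∧ δ ≤ δ₀ ∧ ∀ x ∈ Ω, 0 < v x → v x < δ →
        b₁ * l₁ * C ^ q - C - ε ≤
          v x ^ 2 * (-laplacian (logBarrier C v) x + b x * h ‖gradient (logBarrier C v) x‖
            + a x * logBarrier C v x - f x) := by
  intro ε hε
  obtain ⟨η, hη, hη_small⟩ : ∃ η > 0, ∀ t, 0 < t → t < η → t * (C * M + |F₀|) < ε := by
    have hlim : Filter.Tendsto (fun t : ℝ => t * (C * M + |F₀|)) (𝓝[>] 0) (𝓝 0) :=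
      ((continuous_mul_const _).tendsto' 0 0 (zero_mul _)).mono_left nhdsWithin_le_nhds
    obtain ⟨η, hη, hsub⟩ := mem_nhdsGT_iff_exists_Ioo_subset.mp (hlim.eventually_lt_const hε)
    exact ⟨η, hη, fun t ht htη => hsub ⟨ht, htη⟩⟩
  refine ⟨min δ₀ (min 1 η), by positivity, min_le_left _ _, fun x hxΩ hpos hlt => ?_⟩
  obtain ⟨hltδ₀, hlt1, hltη⟩ : v x < δ₀ ∧ v x < 1 ∧ v x < η := by simpa only [lt_min_iff] using hlt
  have hx : x ∈ {x ∈ Ω | 0 < v x ∧ v x < δ₀} := ⟨hxΩ, hpos, hltδ₀⟩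
  -- `v` is not assumed continuous on `Ω`: its regularity at `x`, hence the fact that the collar is
  -- a neighbourhood of `x`, comes from `gradient v x ≠ 0`.
  have hcont : ContinuousAt v x :=
    (differentiableAt_of_gradient_ne_zero
      (norm_ne_zero_iff.mp ((hgrad x hx).trans_ne one_ne_zero))).continuousAt
  have hnhds : {x ∈ Ω | 0 < v x ∧ v x < δ₀} ∈ 𝓝 x :=
    Filter.inter_mem (hΩ.mem_nhds hxΩ) (hcont.preimage_mem_nhds (Ioo_mem_nhds hpos hltδ₀))
  have hbarrier := le_sq_mul_logBarrier_operator (hv.contDiffAt hnhds) hpos hlt1.le (hgrad x hx)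
    (hlap x hx) hC.le hb₁ hl₁ (hbv x hx) (hh _ (by positivity)) (ha x hx) (hf x hx)
  linarith [hη_small (v x) hpos hltη]

/-- critical logarithmic regime `q = β + 2` (i.e. `β = q − 2 ≥ 0`).
For `W = C·ln(1/v)` with `C > 0`, under `h(s) ≥ l₁·s^q`, `b ≥ b₁·v^β`, `a ≥ 0`,
`f ≤ F₀` on the collar `S = {x ∈ Ω : 0 < v(x) < δ₀}` (with `0 < δ₀ < 1`, `|∇v| = 1`,
`|Δv| ≤ M`), for every `ε > 0` there is `δ ∈ (0, δ₀]` such that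
`v² · (−ΔW + b·h(|∇W|) + a·W − f) ≥ b₁·l₁·C^q − C − ε` on `{0 < v < δ}`. -/
theorem critical_logarithmic_barrier {N : ℕ} (hN : 1 ≤ N)
    (Ω : Set (EuclideanSpace ℝ (Fin N))) (hΩ : IsOpen Ω)
    (δ₀ : ℝ) (hδ₀ : 0 < δ₀) (hδ₀1 : δ₀ < 1)
    (v : EuclideanSpace ℝ (Fin N) → ℝ) (M : ℝ) (hM : 0 ≤ M)
    (hv : ContDiffOn ℝ 2 v {x ∈ Ω | 0 < v x ∧ v x < δ₀})
    (hgrad : ∀ x ∈ {x ∈ Ω | 0 < v x ∧ v x < δ₀}, ‖gradient v x‖ = 1)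
    (hlap : ∀ x ∈ {x ∈ Ω | 0 < v x ∧ v x < δ₀}, |laplacian v x| ≤ M)
    (q β : ℝ) (hq : 1 < q) (hβdef : β = q - 2) (hβ : 0 ≤ β)
    (h : ℝ → ℝ) (l₁ : ℝ) (hl₁ : 0 < l₁)
    (hhnn : ∀ s : ℝ, 0 ≤ s → 0 ≤ h s)
    (hh : ∀ s : ℝ, 0 ≤ s → l₁ * s ^ q ≤ h s)
    (a b f : EuclideanSpace ℝ (Fin N) → ℝ) (b₁ : ℝ) (hb₁ : 0 < b₁)
    (hbv : ∀ x ∈ {x ∈ Ω | 0 < v x ∧ v x < δ₀}, b₁ * v x ^ β ≤ b x)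
    (ha : ∀ x ∈ {x ∈ Ω | 0 < v x ∧ v x < δ₀}, 0 ≤ a x)
    (F₀ : ℝ) (hf : ∀ x ∈ {x ∈ Ω | 0 < v x ∧ v x < δ₀}, f x ≤ F₀)
    (C : ℝ) (hC : 0 < C) :
    ∀ ε : ℝ, 0 < ε →
      ∃ δ : ℝ, 0 < δ ∧ δ ≤ δ₀ ∧ ∀ x ∈ Ω, 0 < v x → v x < δ →
        b₁ * l₁ * C ^ q - C - ε ≤
          v x ^ 2 * (-laplacian (fun y => C * Real.log (1 / v y)) x
            + b x * h ‖gradient (fun y => C * Real.log (1 / v y)) x‖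
            + a x * (C * Real.log (1 / v x)) - f x) := by
  subst hβdef
  exact critical_logarithmic_barrier_general Ω hΩ δ₀ hδ₀ v M hv hgrad
    (fun x hx => neg_le_of_abs_le (hlap x hx)) q h l₁ hl₁.le (fun s hs => hh s hs.le)
    a b f b₁ hb₁.le hbv ha F₀ hf C hC
end
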